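/- Existence of small-amplitude periodic traveling waves (Proposition 2.1, case b = 0, large surface tension): let g, d, T > 0 with τ = T/(gd²) ≥ 1/3 and let k > 0. Then there exist ε > 0, C > 0 and, for each a ∈ (−ε, ε), a smooth, even, real-valued, 2π-periodic function w_a and a speed c_a ∈ ℝ such that: (i) the steady Whitham equation M_k w_a − c_a·w_a + w_a² = 0 holds in the Fourier sense (for every n ∈ ℤ, m(kn)·(ŵ_a)_n − c_a·(ŵ_a)_n + (w_a²)^_n = 0); (ii) w_a is nonconstant for a ≠ 0; (iii) sup_z |w_a(z) − a·cos(z) − (a²/2)(1/(m(k) − m(0)) + cos(2z)/(m(k) − m(2k)))| ≤ C|a|³; and (iv) |c_a − m(k) − a²(1/(m(k) − m(0)) + 1/(2(m(k) − m(2k))))| ≤ C|a|³. -/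

import Mathlib

open Real Filter

/-- The capillary Whitham symbol `m(z) = √(gd(1 + τ z²) tanh z / z)`, `m(0) = √(gd)`,
with `τ = T/(g d²)`. -/
noncomputable def mW (g d T : ℝ) (z : ℝ) : ℝ :=
  if z = 0 then Real.sqrt (g * d)
  else Real.sqrt (g * d * (1 + T / (g * d ^ 2) * z ^ 2) * Real.tanh z / z)

/-- The `n`-th Fourier coefficient of a real-valued `2π`-periodic function. -/
noncomputable def fcoef (f : ℝ → ℝ) (n : ℤ) : ℂ :=
  (1 / (2 * Real.pi)) *
    ∫ z in (-Real.pi)..Real.pi, Complex.exp (-(n : ℂ) * (z : ℂ) * Complex.I) * (f z : ℂ)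

lemma pos_of_hasDerivAt (f f' : ℝ → ℝ) (h : ∀ x, HasDerivAt f (f' x) x) (h0 : f 0 = 0)
    (hp : ∀ x, 0 < x → 0 < f' x) : ∀ x, 0 < x → 0 < f x := by
  intro x hx
  have hm : StrictMonoOn f (Set.Ici 0) := by
    apply strictMonoOn_of_deriv_pos (convex_Ici 0)
    · exact fun y _ => (h y).continuousAt.continuousWithinAt
    · intro y hy
      rw [interior_Ici] at hy
      rw [(h y).deriv]
      exact hp y hy
  have := hm (Set.mem_Ici.2 le_rfl) (Set.mem_Ici.2 hx.le) hx
  rwa [h0] at this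

lemma aux_p (z : ℝ) (hz : 0 < z) :
    0 < 3 * z + z ^ 3 + (z ^ 2 - 3) * (sinh (2 * z) / 2) := by
  have hs : ∀ x : ℝ, HasDerivAt (fun z : ℝ => sinh (2 * z)) (2 * cosh (2 * x)) x := by
    intro x
    have := ((hasDerivAt_id x).const_mul 2).sinh
    simpa [mul_comm] using this
  have hc : ∀ x : ℝ, HasDerivAt (fun z : ℝ => cosh (2 * z)) (2 * sinh (2 * x)) x := by
    intro x
    have := ((hasDerivAt_id x).const_mul 2).cosh
    simpa [mul_comm] using this
  have hi := fun x : ℝ => hasDerivAt_id' x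
  have h2 := fun x : ℝ => hasDerivAt_pow 2 x
  have h3 := fun x : ℝ => hasDerivAt_pow 3 x
  have p3 := pos_of_hasDerivAt
    (fun z => 6 + 12 * z * sinh (2 * z) + (4 * z ^ 2 - 6) * cosh (2 * z))
    (fun z => 32 * z * cosh (2 * z) + 8 * z ^ 2 * sinh (2 * z))
    (fun x => by
      refine (((((hi x).const_mul 12).mul (hs x)).const_add 6).add
        ((((h2 x).const_mul 4).sub_const 6).mul (hc x))).congr_deriv ?_
      simp; ring) (by simp; try norm_num)
    (fun x hx => by
      have : 0 < sinh (2 * x) := Real.sinh_pos_iff.2 (by linarith)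
      have := Real.cosh_pos (2 * x)
      positivity)
  have p2 := pos_of_hasDerivAt
    (fun z => 6 * z + 4 * z * cosh (2 * z) + (2 * z ^ 2 - 5) * sinh (2 * z)) _
    (fun x => by
      refine ((((hi x).const_mul 6).add (((hi x).const_mul 4).mul (hc x))).add
        ((((h2 x).const_mul 2).sub_const 5).mul (hs x))).congr_deriv ?_
      simp; ring) (by simp) p3
  have p1 := pos_of_hasDerivAt
    (fun z => 3 + 3 * z ^ 2 + z * sinh (2 * z) + (z ^ 2 - 3) * cosh (2 * z)) _
    (fun x => by
      refine (((((h2 x).const_mul 3).const_add 3).add ((hi x).mul (hs x))).add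
        (((h2 x).sub_const 3).mul (hc x))).congr_deriv ?_
      simp; ring) (by simp) p2
  exact pos_of_hasDerivAt
    (fun z => 3 * z + z ^ 3 + (z ^ 2 - 3) * (sinh (2 * z) / 2)) _
    (fun x => by
      refine ((((hi x).const_mul 3).add (h3 x)).add
        (((h2 x).sub_const 3).mul ((hs x).div_const 2))).congr_deriv ?_
      simp; ring) (by simp) p1 z hz

lemma aux_r (z : ℝ) (hz : 0 < z) : 0 < (1 + z ^ 2 / 3) * sinh z - z * cosh z := by
  have hi := fun x : ℝ => hasDerivAt_id' x
  have h2 := fun x : ℝ => hasDerivAt_pow 2 x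
  have q := pos_of_hasDerivAt (fun z => z * cosh z - sinh z) (fun z => z * sinh z)
    (fun x => by
      refine (((hi x).mul (Real.hasDerivAt_cosh x)).sub (Real.hasDerivAt_sinh x)).congr_deriv ?_
      ring) (by simp)
    (fun x hx => mul_pos hx (Real.sinh_pos_iff.2 hx))
  exact pos_of_hasDerivAt (fun z => (1 + z ^ 2 / 3) * sinh z - z * cosh z)
    (fun z => z / 3 * (z * cosh z - sinh z))
    (fun x => by
      refine (((((h2 x).div_const 3).const_add 1).mul (Real.hasDerivAt_sinh x)).sub
        ((hi x).mul (Real.hasDerivAt_cosh x))).congr_deriv ?_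
      simp; ring) (by simp)
    (fun x hx => mul_pos (by linarith) (q x hx)) z hz

lemma aux_mono (τ : ℝ) (hτ : 1 / 3 ≤ τ) :
    StrictMonoOn (fun z : ℝ => (1 + τ * z ^ 2) * Real.tanh z / z) (Set.Ioi 0) := by
  have h2 := fun x : ℝ => hasDerivAt_pow 2 x
  have key : ∀ x : ℝ, 0 < x → HasDerivAt (fun z : ℝ => (1 + τ * z ^ 2) * Real.tanh z / z)
      ((x + τ * x ^ 3 + (τ * x ^ 2 - 1) * (sinh x * cosh x)) / (x * cosh x) ^ 2) x := by
    intro x hx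
    have hc := (Real.cosh_pos x).ne'
    have hd := (((((h2 x).const_mul τ).const_add 1).mul (Real.hasDerivAt_sinh x)).div
      ((hasDerivAt_id' x).mul (Real.hasDerivAt_cosh x)) (mul_ne_zero hx.ne' hc))
    have he : (fun z : ℝ => (1 + τ * z ^ 2) * Real.tanh z / z) =
        (fun z : ℝ => (1 + τ * z ^ 2) * sinh z) / (fun z => z * cosh z) := by
      funext z
      simp only [Pi.div_apply, Real.tanh_eq_sinh_div_cosh]
      rw [← mul_div_assoc, div_div, mul_comm z]
    rw [he]
    refine hd.congr_deriv ?_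
    simp only [Pi.mul_apply]
    congr 1
    have := Real.cosh_sq x
    norm_num
    linear_combination (x + τ * x ^ 3) * this
  apply strictMonoOn_of_deriv_pos (convex_Ioi 0)
  · exact fun y hy => (key y hy).continuousAt.continuousWithinAt
  · intro y hy
    rw [interior_Ioi] at hy
    have hy : 0 < y := hy
    rw [(key y hy).deriv]
    have hp := aux_p y hy
    rw [Real.sinh_two_mul] at hp
    have hs : 0 < sinh y := Real.sinh_pos_iff.2 hy
    have hc := Real.cosh_pos y
    have h1 : 0 ≤ (τ - 1 / 3) * (y ^ 3 + y ^ 2 * (sinh y * cosh y)) :=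
      mul_nonneg (by linarith) (by positivity)
    apply div_pos _ (by positivity)
    nlinarith

lemma mW_even (g d T z : ℝ) : mW g d T (-z) = mW g d T z := by
  unfold mW
  simp only [neg_eq_zero, Real.tanh_neg, neg_sq, mul_neg, neg_div_neg_eq]

lemma mW_pos_eq (g d T z : ℝ) (hz : z ≠ 0) : mW g d T z =
    √(g * d * ((1 + T / (g * d ^ 2) * z ^ 2) * Real.tanh z / z)) := by
  unfold mW
  rw [if_neg hz]; congr 1; ring

lemma mW_lt (g d T : ℝ) (hg : 0 < g) (hd : 0 < d) (hτ : 1 / 3 ≤ T / (g * d ^ 2)) (x y : ℝ)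
    (hx : 0 < x) (hxy : x < y) : mW g d T x < mW g d T y := by
  have hy := hx.trans hxy
  rw [mW_pos_eq _ _ _ _ hx.ne', mW_pos_eq _ _ _ _ hy.ne']
  have hgd := mul_pos hg hd
  have hm := aux_mono _ hτ (Set.mem_Ioi.2 hx) (Set.mem_Ioi.2 hy) hxy
  simp only at hm
  apply Real.sqrt_lt_sqrt
  · have : 0 < Real.tanh x := by
      rw [Real.tanh_eq_sinh_div_cosh]
      exact div_pos (Real.sinh_pos_iff.2 hx) (Real.cosh_pos x)
    have : 0 < T / (g * d ^ 2) := by linarith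
    positivity
  · exact mul_lt_mul_of_pos_left hm hgd

lemma mW_zero_lt (g d T : ℝ) (hg : 0 < g) (hd : 0 < d) (hτ : 1 / 3 ≤ T / (g * d ^ 2)) (x : ℝ)
    (hx : 0 < x) : mW g d T 0 < mW g d T x := by
  rw [mW_pos_eq _ _ _ _ hx.ne']
  have hgd := mul_pos hg hd
  have : mW g d T 0 = √(g * d) := by simp [mW]
  rw [this]
  apply Real.sqrt_lt_sqrt hgd.le
  have hr := aux_r x hx
  have hc := Real.cosh_pos x
  have hs : 0 < sinh x := Real.sinh_pos_iff.2 hx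
  have : 1 < (1 + T / (g * d ^ 2) * x ^ 2) * Real.tanh x / x := by
    rw [Real.tanh_eq_sinh_div_cosh, ← mul_div_assoc, div_div, one_lt_div (by positivity)]
    have : 0 ≤ (T / (g * d ^ 2) - 1 / 3) * (x ^ 2 * sinh x) :=
      mul_nonneg (by linarith) (by positivity)
    nlinarith
  nlinarith

lemma mW_gap (g d T : ℝ) (hg : 0 < g) (hd : 0 < d) (hτ : 1 / 3 ≤ T / (g * d ^ 2)) (k : ℝ)
    (hk : 0 < k) : ∃ δ > 0, ∀ n : ℕ, n ≠ 1 → δ ≤ |mW g d T (k * n) - mW g d T k| := by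
  have h0 := mW_zero_lt g d T hg hd hτ k hk
  have h2 := mW_lt g d T hg hd hτ k (k * 2) hk (by linarith)
  refine ⟨min (mW g d T k - mW g d T 0) (mW g d T (k * 2) - mW g d T k),
    lt_min (by linarith) (by linarith), ?_⟩
  intro n hn
  rcases Nat.lt_or_ge n 2 with h | h
  · obtain rfl : n = 0 := by omega
    simp only [Nat.cast_zero, mul_zero]
    rw [abs_sub_comm]
    exact (min_le_left _ _).trans (le_abs_self _)
  · refine le_trans (min_le_right _ _) (le_trans ?_ (le_abs_self _))
    rcases h.eq_or_lt with h | h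
    · simp [← h]
    · have h' : (2 : ℝ) < n := by exact_mod_cast h
      have := mW_lt g d T hg hd hτ (k * 2) (k * n) (by positivity)
        (mul_lt_mul_of_pos_left h' hk)
      linarith
lemma fixed_branch {E : Type*} [NormedAddCommGroup E] [NormedSpace ℝ E] [CompleteSpace E]
    (G : E → E) (hG : ContDiff ℝ 1 G) :
    ∃ ε > 0, ∃ C > 0, ∃ u : ℝ → E, ∀ a : ℝ, |a| < ε →
      u a = a • G (u a) ∧ ‖u a‖ ≤ C * |a| ∧ ‖u a - a • G 0‖ ≤ C * |a| ^ 2 := by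
  set f : ℝ × E → E := fun p => p.2 - p.1 • G p.2 with hf
  have hfc : ContDiff ℝ 1 f := by
    have : ContDiff ℝ 1 (fun p : ℝ × E => G p.2) := hG.comp contDiff_snd
    exact contDiff_snd.sub (contDiff_fst.smul this)
  have hs : HasStrictFDerivAt f (fderiv ℝ f (0, 0)) ((0 : ℝ), (0 : E)) :=
    hfc.contDiffAt.hasStrictFDerivAt one_ne_zero
  have hinr : fderiv ℝ f (0, 0) ∘L .inr ℝ ℝ E = ContinuousLinearMap.id ℝ E := by
    have h1 : HasFDerivAt (fun y : E => f (0, y)) (fderiv ℝ f (0, 0) ∘L .inr ℝ ℝ E) 0 :=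
      HasFDerivAt.comp (0 : E) (f := fun y : E => ((0 : ℝ), y)) hs.hasFDerivAt
        (hasFDerivAt_prodMk_right (0 : ℝ) (0 : E))
    have h2 : (fun y : E => f (0, y)) = id := by funext y; simp [hf]
    rw [h2] at h1
    exact h1.unique (hasFDerivAt_id 0)
  have hinv : (fderiv ℝ f (0, 0) ∘L .inr ℝ ℝ E).IsInvertible := by
    rw [hinr]; exact ContinuousLinearMap.isInvertible_equiv (f := ContinuousLinearEquiv.refl ℝ E)
  set u := hs.implicitFunctionOfProdDomain hinv with hu
  have e1 := hs.eventually_apply_implicitFunctionOfProdDomain hinv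
  have t1 := hs.tendsto_implicitFunctionOfProdDomain hinv
  have d1 := (hs.hasStrictFDerivAt_implicitFunctionOfProdDomain hinv).hasFDerivAt.isBigO_sub
  rw [← hu] at e1 t1 d1
  simp only at e1 t1 d1
  have u0 : u 0 = 0 := by
    have := e1.self_of_nhds
    simpa [hf] using this
  rw [u0] at d1
  have d2 : (fun y => G y - G 0) =O[nhds 0] fun y => y - 0 :=
    ((hG.differentiable one_ne_zero) 0).hasFDerivAt.isBigO_sub
  have d3 := d2.comp_tendsto t1
  obtain ⟨A, hA, b1⟩ := d1.exists_pos
  obtain ⟨B, hB, b3⟩ := d3.exists_pos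
  have hall := e1.and (b1.bound.and b3.bound)
  obtain ⟨ε, hε, hb⟩ := Metric.eventually_nhds_iff.1 hall
  refine ⟨ε, hε, A + B * A, by positivity, u, fun a ha => ?_⟩
  obtain ⟨h1, h2, h3⟩ := hb (y := a) (by simpa [Real.dist_eq] using ha)
  simp only [hf, Function.comp, sub_zero, zero_smul, Real.norm_eq_abs] at h1 h2 h3
  have h1' : u a = a • G (u a) := by simpa [sub_eq_zero] using h1
  refine ⟨h1', ?_, ?_⟩
  · have : 0 ≤ B * A * |a| := by positivity
    nlinarith
  · have : u a - a • G 0 = a • (G (u a) - G 0) := by rw [smul_sub, ← h1']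
    rw [this, norm_smul, Real.norm_eq_abs]
    calc |a| * ‖G (u a) - G 0‖ ≤ |a| * (B * (A * |a|)) := by gcongr; exact h3.trans (by gcongr)
      _ ≤ (A + B * A) * |a| ^ 2 := by
        have : 0 ≤ A * |a| ^ 2 := by positivity
        nlinarith

/-- The sequence space. -/
abbrev El := lp (fun _ : ℕ => ℝ) 1

noncomputable def ee (n : ℕ) : El := lp.single 1 n (1 : ℝ)

lemma ee_norm (n : ℕ) : ‖ee n‖ = 1 := by
  rw [ee, lp.norm_single (by norm_num)]; simp

lemma ee_apply (n m : ℕ) : (ee n : ℕ → ℝ) m = if m = n then 1 else 0 := by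
  simp [ee, Pi.single_apply]

lemma El_hasSum_norm (u : El) : HasSum (fun n => |u n|) ‖u‖ := by
  simpa using lp.hasSum_norm (p := 1) (by norm_num) u

section
set_option linter.unusedSectionVars false
variable {F : Type*} [NormedAddCommGroup F] [NormedSpace ℝ F] [CompleteSpace F]

lemma lift_summable_norm (v : ℕ → F) (C : ℝ) (h : ∀ n, ‖v n‖ ≤ C) (u : El) :
    Summable fun n => ‖u n • v n‖ := by
  refine Summable.of_nonneg_of_le (fun _ => norm_nonneg _) (fun n => ?_)
    ((El_hasSum_norm u).summable.mul_right C)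
  rw [norm_smul, Real.norm_eq_abs]
  gcongr
  exact h n

/-- Continuous linear map with prescribed values on the basis. -/
noncomputable def lift1 (v : ℕ → F) (C : ℝ) (h : ∀ n, ‖v n‖ ≤ C) : El →L[ℝ] F :=
  LinearMap.mkContinuous
    { toFun := fun u => ∑' n, u n • v n
      map_add' := fun x y => by
        rw [← (lift_summable_norm v C h x).of_norm.tsum_add (lift_summable_norm v C h y).of_norm]
        congr 1; funext n; simp [add_smul]
      map_smul' := fun c x => by
        rw [RingHom.id_apply, ← (lift_summable_norm v C h x).of_norm.tsum_const_smul]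
        congr 1; funext n; simp [mul_smul] } C (fun x => by
        refine tsum_of_norm_bounded (a := C * ‖x‖) ((El_hasSum_norm x).mul_left C) ?_
        intro n
        rw [norm_smul, Real.norm_eq_abs, mul_comm]
        gcongr
        exact h n)

lemma lift1_apply (v : ℕ → F) (C : ℝ) (h : ∀ n, ‖v n‖ ≤ C) (u : El) :
    lift1 v C h u = ∑' n, u n • v n := rfl

lemma lift1_ee (v : ℕ → F) (C : ℝ) (h : ∀ n, ‖v n‖ ≤ C) (n : ℕ) :
    lift1 v C h (ee n) = v n := by
  rw [lift1_apply, tsum_eq_single n]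
  · simp [ee_apply]
  · intro m hm; simp [ee_apply, hm]

lemma lift1_norm (v : ℕ → F) (C : ℝ) (h : ∀ n, ‖v n‖ ≤ C) (hC : 0 ≤ C) :
    ‖lift1 v C h‖ ≤ C := LinearMap.mkContinuous_norm_le _ hC _

lemma El_ext {f g : El →L[ℝ] F} (h : ∀ n, f (ee n) = g (ee n)) : f = g := by
  refine lp.ext_continuousLinearMap (by norm_num) fun i => ?_
  ext
  simpa [ee] using h i
end

noncomputable def bb (m n : ℕ) : El :=
  (1 / 2 : ℝ) • ee (m + n) + (1 / 2 * (1 / 2) ^ (2 * min m n) : ℝ) • ee (max m n - min m n)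

lemma bb_norm (m n : ℕ) : ‖bb m n‖ ≤ 1 := by
  have h1 : ((1 / 2 : ℝ)) ^ (2 * min m n) ≤ 1 := pow_le_one₀ (by norm_num) (by norm_num)
  have h2 : (0 : ℝ) ≤ ((1 / 2 : ℝ)) ^ (2 * min m n) := by positivity
  refine (norm_add_le _ _).trans ?_
  rw [norm_smul, norm_smul, ee_norm, ee_norm, Real.norm_eq_abs, Real.norm_eq_abs,
    abs_of_nonneg (by norm_num), abs_of_nonneg (by positivity)]
  linarith

noncomputable def cv : El →L[ℝ] El →L[ℝ] El :=
  lift1 (fun m => lift1 (fun n => bb m n) 1 (bb_norm m)) 1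
    (fun _ => lift1_norm _ _ _ zero_le_one)

lemma cv_ee (m n : ℕ) : cv (ee m) (ee n) = bb m n := by
  rw [cv, lift1_ee, lift1_ee]

lemma bf_bound (z : ℝ) (n : ℕ) : ‖(1 / 2 : ℝ) ^ n * Real.cos (n * z)‖ ≤ 1 := by
  rw [Real.norm_eq_abs, abs_mul, abs_of_nonneg (by positivity)]
  exact mul_le_one₀ (pow_le_one₀ (by norm_num) (by norm_num)) (abs_nonneg _) (Real.abs_cos_le_one _)

noncomputable def Wv (z : ℝ) : El →L[ℝ] ℝ :=
  lift1 (fun n => (1 / 2 : ℝ) ^ n * Real.cos (n * z)) 1 (bf_bound z)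

lemma Wv_apply (z : ℝ) (u : El) :
    Wv z u = ∑' n : ℕ, u n * ((1 / 2 : ℝ) ^ n * Real.cos (n * z)) := rfl

lemma Wv_ee (z : ℝ) (n : ℕ) : Wv z (ee n) = (1 / 2 : ℝ) ^ n * Real.cos (n * z) := by
  rw [Wv, lift1_ee]

lemma Wv_le (z : ℝ) (u : El) : |Wv z u| ≤ ‖u‖ := by
  have := (Wv z).le_of_opNorm_le (lift1_norm _ _ (bf_bound z) zero_le_one) u
  simpa using this

lemma Wv_bb (z : ℝ) (m n : ℕ) : Wv z (bb m n) = Wv z (ee m) * Wv z (ee n) := by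
  rw [bb]
  simp only [map_add, map_smul, Wv_ee, smul_eq_mul]
  have key : ∀ p q : ℕ, p ≤ q → 1 / 2 * ((1 / 2 : ℝ) ^ (p + q) * Real.cos (((p + q : ℕ) : ℝ) * z)) +
      1 / 2 * (1 / 2) ^ (2 * p) * ((1 / 2) ^ (q - p) * Real.cos (((q - p : ℕ) : ℝ) * z)) =
      (1 / 2) ^ p * Real.cos (p * z) * ((1 / 2) ^ q * Real.cos (q * z)) := by
    intro p q hpq
    obtain ⟨r, rfl⟩ := Nat.exists_eq_add_of_le hpq
    rw [Nat.add_sub_cancel_left]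
    have h1 : Real.cos (((p + (p + r) : ℕ) : ℝ) * z) =
      Real.cos (p * z) * Real.cos ((p + r : ℕ) * z) -
      Real.sin (p * z) * Real.sin ((p + r : ℕ) * z) := by
      rw [← Real.cos_add]; congr 1; push_cast; ring
    have h2 : Real.cos ((r : ℝ) * z) =
      Real.cos ((p + r : ℕ) * z) * Real.cos (p * z) +
      Real.sin ((p + r : ℕ) * z) * Real.sin (p * z) := by
      rw [← Real.cos_sub]; congr 1; push_cast; ring
    rw [h1, h2]
    ring
  rcases le_total m n with h | h
  · rw [min_eq_left h, max_eq_right h]; exact key m n h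
  · rw [min_eq_right h, max_eq_left h, add_comm m n, mul_comm ((1 / 2 : ℝ) ^ m * _)]; exact key n m h

lemma Wv_cv (z : ℝ) (u v : El) : Wv z (cv u v) = Wv z u * Wv z v := by
  have h : ((Wv z).postcomp El) ∘L cv = (Wv z).smulRight (Wv z) := by
    apply El_ext; intro m
    apply El_ext; intro n
    simp [cv_ee, Wv_bb]
  have := congrArg (fun f => f u v) h
  simpa using this

lemma Wv_smooth (u : El) : ContDiff ℝ (⊤ : ℕ∞) (fun z => Wv z u) := by
  simp only [Wv_apply]
  refine contDiff_tsum (v := fun (k n : ℕ) => ‖u‖ * ((n : ℝ) ^ k * (1 / 2 : ℝ) ^ n)) ?_ ?_ ?_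
  · intro n
    fun_prop
  · intro k _
    have h : Summable (fun n : ℕ => (n : ℝ) ^ k * (1 / 2 : ℝ) ^ n) :=
      summable_pow_mul_geometric_of_norm_lt_one k (by norm_num)
    exact h.mul_left ‖u‖
  · intro k n x _
    have hc : ContDiff ℝ k (fun z : ℝ => Real.cos (n * z)) := by fun_prop
    rw [norm_iteratedFDeriv_eq_norm_iteratedDeriv]
    have e : (fun z : ℝ => u n * ((1 / 2 : ℝ) ^ n * Real.cos (n * z))) =
      fun z => (u n * (1 / 2 : ℝ) ^ n) * Real.cos (n * z) := by funext z; ring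
    rw [e, iteratedDeriv_const_mul_field, iteratedDeriv_comp_const_mul Real.contDiff_cos]
    simp only [smul_eq_mul, norm_mul, norm_pow, Real.norm_eq_abs]
    have h1 : |u n| ≤ ‖u‖ := by simpa using lp.norm_apply_le_norm (p := 1) (by norm_num) u n
    have h2 : |iteratedDeriv k Real.cos (n * x)| ≤ 1 := by
      exact Real.abs_iteratedDeriv_cos_le_one k _
    rw [abs_of_nonneg (by norm_num : (0:ℝ) ≤ 1/2), Nat.abs_cast]
    calc _ ≤ ‖u‖ * (1/2)^n * ((n:ℝ)^k * 1) := by gcongr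
      _ = _ := by ring

lemma Wv_even (u : El) (z : ℝ) : Wv (-z) u = Wv z u := by
  simp [Wv_apply]

lemma Wv_periodic (u : El) : Function.Periodic (fun z => Wv z u) (2 * Real.pi) := by
  intro z
  simp only [Wv_apply]
  congr 1; funext n
  rw [mul_add, Real.cos_add_nat_mul_two_pi]

lemma int_exp (j : ℤ) : ∫ z in (-Real.pi)..Real.pi, Complex.exp ((j : ℂ) * (z : ℂ) * Complex.I) =
    if j = 0 then 2 * (Real.pi : ℂ) else 0 := by
  split_ifs with h
  · subst h
    simp
    ring
  · have hj : (j : ℂ) * Complex.I ≠ 0 := mul_ne_zero (by exact_mod_cast h) Complex.I_ne_zero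
    have e : ∀ z : ℝ, Complex.exp ((j : ℂ) * (z : ℂ) * Complex.I) =
        Complex.exp ((j : ℂ) * Complex.I * (z : ℂ)) := fun z => by congr 1; ring
    simp_rw [e]
    rw [integral_exp_mul_complex hj]
    have : Complex.exp ((j : ℂ) * Complex.I * (Real.pi : ℂ)) =
        Complex.exp ((j : ℂ) * Complex.I * ((-Real.pi : ℝ) : ℂ)) := by
      rw [Complex.exp_eq_exp_iff_exists_int]
      exact ⟨j, by push_cast; ring⟩
    rw [this, sub_self, zero_div]

lemma fcoef_basis (m : ℕ) (n : ℤ) : fcoef (fun z => Real.cos (m * z)) n =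
    if m = n.natAbs then (if m = 0 then 1 else 1 / 2) else 0 := by
  unfold fcoef
  have e : ∀ z : ℝ, Complex.exp (-(n : ℂ) * (z : ℂ) * Complex.I) * ((Real.cos (m * z) : ℝ) : ℂ) =
      1 / 2 * Complex.exp (((m - n : ℤ) : ℂ) * (z : ℂ) * Complex.I) +
      1 / 2 * Complex.exp (((-m - n : ℤ) : ℂ) * (z : ℂ) * Complex.I) := by
    intro z
    rw [Complex.ofReal_cos, Complex.cos]
    push_cast
    rw [mul_div_assoc', mul_add, ← Complex.exp_add, ← Complex.exp_add]
    rw [show -(n : ℂ) * z * Complex.I + m * z * Complex.I = (m - n) * z * Complex.I by ring,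
      show -(n : ℂ) * z * Complex.I + -(m * z) * Complex.I = (-m - n) * z * Complex.I by ring]
    ring
  simp_rw [e]
  rw [intervalIntegral.integral_add, intervalIntegral.integral_const_mul,
    intervalIntegral.integral_const_mul, int_exp, int_exp]
  · have hpi : (Real.pi : ℂ) ≠ 0 := by exact_mod_cast Real.pi_ne_zero
    by_cases hm : m = n.natAbs
    · by_cases h0 : m = 0
      · have hn : n = 0 := by omega
        subst hn
        simp [h0]
        field_simp
        norm_num
      · rw [if_pos hm, if_neg h0]
        rcases lt_or_ge n 0 with h | h
        · rw [if_neg (by omega), if_pos (by omega)]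
          field_simp; simp
        · rw [if_pos (by omega), if_neg (by omega)]
          field_simp; simp
    · rw [if_neg hm, if_neg (by omega), if_neg (by omega)]
      simp
  · exact Continuous.intervalIntegrable (by fun_prop) _ _
  · exact Continuous.intervalIntegrable (by fun_prop) _ _

lemma fcoef_Wv (u : El) (n : ℤ) : fcoef (fun z => Wv z u) n =
    ((u n.natAbs * ((1 / 2 : ℝ) ^ n.natAbs * (if n.natAbs = 0 then 1 else 1 / 2)) : ℝ) : ℂ) := by
  let f : ℕ → C(ℝ, ℂ) := fun i => ⟨fun z => Complex.exp (-(n : ℂ) * (z : ℂ) * Complex.I) *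
    ((u i * ((1 / 2 : ℝ) ^ i * Real.cos (i * z)) : ℝ) : ℂ), by fun_prop⟩
  have hf : ∀ i z, f i z = Complex.exp (-(n : ℂ) * (z : ℂ) * Complex.I) *
    ((u i * ((1 / 2 : ℝ) ^ i * Real.cos (i * z)) : ℝ) : ℂ) := fun _ _ => rfl
  have hs := intervalIntegral.hasSum_intervalIntegral_of_summable_norm (a := -Real.pi)
    (b := Real.pi) (f := f) (by
      refine Summable.of_nonneg_of_le (fun _ => norm_nonneg _) (fun i => ?_)
        (El_hasSum_norm u).summable
      rw [ContinuousMap.norm_le _ (abs_nonneg _)]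
      intro x
      rw [ContinuousMap.restrict_apply, hf, norm_mul]
      rw [show -(n : ℂ) * ((x : ℝ) : ℂ) * Complex.I = ((-(n : ℝ) * (x : ℝ) : ℝ) : ℂ) * Complex.I by
        push_cast; ring, Complex.norm_exp_ofReal_mul_I, one_mul, Complex.norm_real, norm_mul]
      have := bf_bound (x : ℝ) i
      calc _ ≤ ‖u i‖ * 1 := by gcongr
        _ = _ := by simp)
  have e1 : (fun z : ℝ => ∑' i, f i z) = fun z : ℝ =>
      Complex.exp (-(n : ℂ) * (z : ℂ) * Complex.I) * ((Wv z u : ℝ) : ℂ) := by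
    funext z
    simp only [hf]
    rw [tsum_mul_left, Wv_apply, Complex.ofReal_tsum]
  rw [e1] at hs
  have hs2 := hs.mul_left (1 / (2 * (Real.pi : ℂ)))
  have e2 : ∀ i : ℕ, 1 / (2 * (Real.pi : ℂ)) * (∫ z in (-Real.pi)..Real.pi, f i z) =
      ((u i * (1 / 2 : ℝ) ^ i : ℝ) : ℂ) * fcoef (fun z => Real.cos (i * z)) n := by
    intro i
    unfold fcoef
    rw [mul_left_comm]
    congr 1
    rw [← intervalIntegral.integral_const_mul]
    congr 1
    funext z
    rw [hf]; push_cast; ring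
  simp_rw [e2, fcoef_basis] at hs2
  have := hs2.unique (hasSum_single n.natAbs (fun i hi => by rw [if_neg hi, mul_zero]))
  rw [fcoef, this, if_pos rfl]
  split_ifs <;> push_cast <;> ring

noncomputable def ev (n : ℕ) : El →L[ℝ] ℝ := lp.evalCLM ℝ (fun _ : ℕ => ℝ) 1 n

lemma ev_apply (n : ℕ) (u : El) : ev n u = u n := rfl

lemma ev_ee (n m : ℕ) : ev n (ee m) = if n = m then 1 else 0 := ee_apply m n

lemma ev_le (n : ℕ) (u : El) : |ev n u| ≤ ‖u‖ := by
  rw [ev_apply]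
  simpa using lp.norm_apply_le_norm (p := 1) (by norm_num) u n

lemma cv_le (u v : El) : ‖cv u v‖ ≤ ‖u‖ * ‖v‖ := by
  have := cv.le_of_opNorm₂_le_of_le (lift1_norm _ _ _ zero_le_one : ‖cv‖ ≤ 1) (le_refl ‖u‖) (le_refl ‖v‖)
  simpa using this

lemma cv_comm (u v : El) : cv u v = cv v u := by
  have h : cv = cv.flip := by
    apply El_ext; intro m
    apply El_ext; intro n
    rw [ContinuousLinearMap.flip_apply, cv_ee, cv_ee, bb, bb, min_comm, max_comm, add_comm m n]
  have := congrArg (fun f => f u v) h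
  simpa using this

section
variable (lam : ℕ → ℝ) (C : ℝ) (h : ∀ n, |lam n| ≤ C)

lemma lam_bound (lam : ℕ → ℝ) (C : ℝ) (h : ∀ n, |lam n| ≤ C) (n : ℕ) : ‖lam n • ee n‖ ≤ C := by
  rw [norm_smul, ee_norm, mul_one]; exact h n

noncomputable def LL (lam : ℕ → ℝ) (C : ℝ) (h : ∀ n, |lam n| ≤ C) : El →L[ℝ] El :=
  lift1 (fun n => lam n • ee n) C (lam_bound lam C h)

lemma LL_ee (n : ℕ) : LL lam C h (ee n) = lam n • ee n := by
  rw [LL, lift1_ee]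

lemma ev_LL (n : ℕ) (u : El) : ev n (LL lam C h u) = lam n * ev n u := by
  have : ev n ∘L LL lam C h = lam n • ev n := by
    apply El_ext; intro m
    simp only [ContinuousLinearMap.comp_apply, LL_ee, map_smul, ev_ee,
      smul_apply, smul_eq_mul]
    split_ifs with hh <;> simp [hh]
  exact congrArg (fun f => f u) this

noncomputable def sqq (u : El) : El := cv ((2 : ℝ) • ee 1 + u) ((2 : ℝ) • ee 1 + u)

noncomputable def GG (lam : ℕ → ℝ) (C : ℝ) (h : ∀ n, |lam n| ≤ C) (u : El) : El :=
  LL lam C h ((ev 1 (sqq u) / 2) • u - sqq u)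

lemma sqq_contDiff : ContDiff ℝ 1 sqq := by
  have h1 : ContDiff ℝ 1 (fun u : El => (2 : ℝ) • ee 1 + u) := contDiff_const.add contDiff_id
  exact (cv.contDiff.comp h1).clm_apply h1

lemma GG_contDiff : ContDiff ℝ 1 (GG lam C h) := by
  have h1 := sqq_contDiff
  have h2 : ContDiff ℝ 1 (fun u => ev 1 (sqq u) / 2) := ((ev 1).contDiff.comp h1).div_const 2
  exact (LL lam C h).contDiff.comp ((h2.smul contDiff_id).sub h1)

lemma sqq_zero : sqq 0 = (2 : ℝ) • ee 2 + (1 / 2 : ℝ) • ee 0 := by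
  simp only [sqq, add_zero, map_smul, smul_apply, cv_ee, bb]
  norm_num [smul_smul]

lemma GG_zero : GG lam C h 0 = -((2 * lam 2) • ee 2 + (lam 0 / 2) • ee 0) := by
  rw [GG, sqq_zero]
  simp only [smul_zero, zero_sub, map_neg, map_add, map_smul, LL_ee, smul_smul]
  congr 3; ring

lemma ev_cv_GG_zero : ev 1 (cv ((2 : ℝ) • ee 1) (GG lam C h 0)) = -(lam 0 + lam 2 / 2) := by
  rw [GG_zero]
  simp only [map_smul, smul_apply, map_neg, map_add, cv_ee, bb, ev_ee]
  norm_num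
  ring

lemma ev_sqq (u : El) : ev 1 (sqq u) / 2 = ev 1 (cv ((2 : ℝ) • ee 1) u) + ev 1 (cv u u) / 2 := by
  have h0 : ev 1 (sqq 0) = 0 := by
    rw [sqq_zero]; simp [ev_ee]
  rw [sqq, add_zero] at h0
  rw [sqq]
  simp only [map_add, add_apply]
  rw [cv_comm u ((2 : ℝ) • ee 1), h0]
  ring
end
/-- existence of small-amplitude periodic traveling waves of the
capillarity-modified Whitham equation in the case `b = 0`, `τ ≥ 1/3`, together with
their small-amplitude asymptotics. -/
theorem whitham_small_amplitude_existence (g d T : ℝ) (hg : 0 < g) (hd : 0 < d)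
    (hT : 0 < T) (hτ : 1 / 3 ≤ T / (g * d ^ 2)) (k : ℝ) (hk : 0 < k) :
    ∃ ε > 0, ∃ C > 0, ∃ w : ℝ → ℝ → ℝ, ∃ cs : ℝ → ℝ,
      ∀ a : ℝ, |a| < ε →
        ContDiff ℝ (⊤ : ℕ∞) (w a) ∧
        (∀ z : ℝ, w a (-z) = w a z) ∧
        Function.Periodic (w a) (2 * Real.pi) ∧
        (∀ n : ℤ,
          (mW g d T (k * (n : ℝ)) : ℂ) * fcoef (w a) n - (cs a : ℂ) * fcoef (w a) n +
            fcoef (fun z => w a z ^ 2) n = 0) ∧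
        (a ≠ 0 → ∃ z₁ z₂ : ℝ, w a z₁ ≠ w a z₂) ∧
        (∀ z : ℝ,
          |w a z - a * Real.cos z -
            a ^ 2 / 2 * (1 / (mW g d T k - mW g d T 0) +
              Real.cos (2 * z) / (mW g d T k - mW g d T (2 * k)))| ≤ C * |a| ^ 3) ∧
        |cs a - mW g d T k -
          a ^ 2 * (1 / (mW g d T k - mW g d T 0) +
            1 / (2 * (mW g d T k - mW g d T (2 * k))))| ≤ C * |a| ^ 3 := by
  obtain ⟨δ, hδ, hgap⟩ := mW_gap g d T hg hd hτ k hk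
  set m : ℝ → ℝ := mW g d T with hm
  set lam : ℕ → ℝ := fun n => if n = 1 then 0 else 1 / (m (k * n) - m k) with hlam
  have hb : ∀ n, |lam n| ≤ 1 / δ := by
    intro n
    simp only [hlam]
    split_ifs with h
    · simp only [abs_zero]; positivity
    · rw [abs_div, abs_one]
      exact one_div_le_one_div_of_le hδ (hgap n h)
  have hne : ∀ n : ℕ, n ≠ 1 → m (k * n) - m k ≠ 0 := fun n h h0 => by
    have := hgap n h
    rw [h0, abs_zero] at this; linarith
  have l0 : lam 0 = -(1 / (m k - m 0)) := by
    simp only [hlam]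
    rw [if_neg (by norm_num), Nat.cast_zero, mul_zero, ← neg_sub (m k), one_div, one_div, inv_neg]
  have l2 : lam 2 = -(1 / (m k - m (2 * k))) := by
    simp only [hlam]
    rw [if_neg (by norm_num), Nat.cast_ofNat, mul_comm k, ← neg_sub (m k), one_div, one_div, inv_neg]
  obtain ⟨ε, hε, C, hC, u, hu⟩ := fixed_branch (GG lam (1 / δ) hb) (GG_contDiff lam (1 / δ) hb)
  set G0 := GG lam (1 / δ) hb 0 with hG0
  refine ⟨ε, hε, 2 * C + C ^ 2, by positivity, fun a z => Wv z (a • ((2 : ℝ) • ee 1 + u a)),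
    fun a => m k + a * (ev 1 (sqq (u a)) / 2), fun a ha => ?_⟩
  obtain ⟨hfix, hn1, hn2⟩ := hu a ha
  beta_reduce
  generalize hU : a • ((2 : ℝ) • ee 1 + u a) = U
  have hev : ∀ n, ev n (u a) = a * (lam n * (ev 1 (sqq (u a)) / 2 * ev n (u a) - ev n (sqq (u a)))) := by
    intro n
    conv_lhs => rw [hfix]
    rw [map_smul, GG, ev_LL, map_sub, map_smul]
    simp only [smul_eq_mul]
  have hu1 : ev 1 (u a) = 0 := by
    rw [hev 1]; simp [hlam]
  have hUU : cv U U = a ^ 2 • sqq (u a) := by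
    rw [← hU, sqq]
    simp only [map_smul, smul_apply, smul_smul]
    rw [_root_.sq]
  have hUn : ∀ n, ev n U = a * ((if n = 1 then 2 else 0) + ev n (u a)) := by
    intro n
    rw [← hU]
    simp only [map_smul, map_add, ev_ee, smul_eq_mul]
    split_ifs <;> ring
  have hmodes : ∀ n : ℕ, (m (k * n) - (m k + a * (ev 1 (sqq (u a)) / 2))) * ev n U +
      ev n (cv U U) = 0 := by
    intro n
    rw [hUU, map_smul, smul_eq_mul, hUn]
    by_cases h : n = 1
    · subst h
      rw [hu1]; simp; ring
    · have hl : lam n * (m (k * n) - m k) = 1 := by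
        simp only [hlam]; rw [if_neg h]; exact one_div_mul_cancel (hne n h)
      rw [if_neg h]
      have := hev n
      linear_combination (m (k * n) - m k) * a * this +
        a ^ 2 * (ev 1 (sqq (u a)) / 2 * ev n (u a) - ev n (sqq (u a))) * hl
  refine ⟨Wv_smooth U, Wv_even U, Wv_periodic U, ?_, ?_, ?_, ?_⟩
  · intro n
    have e : (fun z => Wv z U ^ 2) = fun z => Wv z (cv U U) := by
      funext z; rw [Wv_cv, _root_.sq]
    have hmn : m (k * (n : ℝ)) = m (k * (n.natAbs : ℝ)) := by
      rcases Int.natAbs_eq n with h | h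
      · conv_lhs => rw [h]
        simp
      · conv_lhs => rw [h]
        rw [hm, Int.cast_neg, mul_neg, mW_even, Int.cast_natCast]
    rw [e, fcoef_Wv, fcoef_Wv, hmn]
    have := hmodes n.natAbs
    rw [ev_apply n.natAbs, ev_apply n.natAbs] at this
    norm_cast
    linear_combination ((1 / 2 : ℝ) ^ n.natAbs * (if n.natAbs = 0 then 1 else 1 / 2)) * this
  · intro ha0
    by_contra! hcon
    have e : (fun z => Wv z U) = fun z => Wv z (Wv 0 U • ee 0) := by
      funext z
      rw [map_smul (Wv z), Wv_ee]
      simpa using hcon z 0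
    have h1 := fcoef_Wv U 1
    rw [e, fcoef_Wv] at h1
    have h2 := hUn 1
    rw [hu1, ev_apply] at h2
    rw [show Int.natAbs 1 = 1 from rfl, h2] at h1
    norm_num [ee_apply] at h1
    exact ha0 h1
  · intro z
    have e : Wv z U - a * Real.cos z - a ^ 2 / 2 * (1 / (m k - m 0) +
        Real.cos (2 * z) / (m k - m (2 * k))) = Wv z (a • (u a - a • G0)) := by
      rw [← hU, hG0, GG_zero, l0, l2]
      simp only [map_smul, map_add, map_sub, map_neg, Wv_ee, smul_eq_mul]
      push_cast
      simp only [zero_mul, Real.cos_zero, one_mul]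
      ring
    rw [e]
    refine (Wv_le _ _).trans ?_
    rw [norm_smul, Real.norm_eq_abs]
    calc |a| * ‖u a - a • G0‖ ≤ |a| * (C * |a| ^ 2) := by gcongr
      _ ≤ (2 * C + C ^ 2) * |a| ^ 3 := by
        have : 0 ≤ (C + C ^ 2) * |a| ^ 3 := by positivity
        nlinarith
  · have e : m k + a * (ev 1 (sqq (u a)) / 2) - m k - a ^ 2 * (1 / (m k - m 0) +
        1 / (2 * (m k - m (2 * k)))) = a * (ev 1 (cv ((2 : ℝ) • ee 1) (u a - a • G0)) +
          ev 1 (cv (u a) (u a)) / 2) := by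
      have h3 := ev_cv_GG_zero lam (1 / δ) hb
      rw [← hG0] at h3
      rw [ev_sqq, map_sub, map_sub, map_smul (cv _), map_smul (ev 1), h3, l0, l2, smul_eq_mul]
      rw [← one_div_mul_one_div]
      ring
    rw [e, abs_mul]
    have b1 : |ev 1 (cv ((2 : ℝ) • ee 1) (u a - a • G0))| ≤ 2 * (C * |a| ^ 2) := by
      refine (ev_le _ _).trans ((cv_le _ _).trans ?_)
      rw [norm_smul, ee_norm]
      rw [Real.norm_eq_abs, abs_two, mul_one]
      gcongr
    have b2 : |ev 1 (cv (u a) (u a))| ≤ (C * |a|) * (C * |a|) :=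
      (ev_le _ _).trans ((cv_le _ _).trans (by gcongr))
    have b3 : |ev 1 (cv ((2 : ℝ) • ee 1) (u a - a • G0)) + ev 1 (cv (u a) (u a)) / 2| ≤
        (2 * C + C ^ 2) * |a| ^ 2 := by
      refine (abs_add_le _ _).trans ?_
      rw [abs_div, abs_two]
      have : 0 ≤ C ^ 2 * |a| ^ 2 := by positivity
      nlinarith
    calc _ ≤ |a| * ((2 * C + C ^ 2) * |a| ^ 2) := by gcongr
      _ = _ := by ring
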